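/- Let L, M, M' be finite reflexive path graphs, f : M → L and f' : M' → L epimorphisms, and suppose m_- (resp. m'_-) is an endpoint of M (resp. M') with tp^{m_-}(f) = tp^{m'_-}(f') as L-types. Then there exist a finite reflexive path graph O, an endpoint o_- of O, and epimorphisms g : O → M, g' : O → M' with f ∘ g = f' ∘ g', g(o_-) = m_-, and g'(o_-) = m'_-. -/

import Mathlib

/-- Adjacency in a reflexive path graph on `ℕ`: `|x - y| ≤ 1`. -/
def adjPath (x y : ℕ) : Prop := x ≤ y + 1 ∧ y ≤ x + 1

/-- `f` is an epimorphism from the reflexive path graph on `[0, nA)` onto the one on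
`[0, nB)`. -/
def IsPathEpi (nA nB : ℕ) (f : ℕ → ℕ) : Prop :=
  (∀ a, a < nA → f a < nB) ∧
  (∀ x y, x < nA → y < nA → adjPath x y → adjPath (f x) (f y)) ∧
  (∀ b b', b < nB → b' < nB → adjPath b b' →
    ∃ x y, x < nA ∧ y < nA ∧ adjPath x y ∧ f x = b ∧ f y = b')

/-- The type of the endpoint `0` of `[0, nM)` with respect to `f`: the family of images
of initial subintervals containing `0`. -/
def tpZero (nM : ℕ) (f : ℕ → ℕ) : Set (Set ℕ) :=
  { S | ∃ k, 1 ≤ k ∧ k ≤ nM ∧ S = f '' Set.Iio k }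

/-! Both walks are extended past their last vertex by running them backwards; this turns them into
walks on all of `ℕ` with the same family of prefix images, and a path in their fibre product from
`(0, 0)` to a pair past both turns crosses the whole of both original paths. So it is enough to
find such a path in the fibre product.

The basic move is the mountain climbing lemma: two walks which go from a common value `a` to a
common value `b` and stay between them can be climbed simultaneously. Hence, within prefixes with
equal images, any two pairs over an extreme value of the image are connected. Equality of types
says that the two walks discover new values in the same order. Just before a new value is found
both walks sit at the same extreme value of the current image, so they can step to the new value
together. -/

open Set

section Walk

/-- A walk in the infinite reflexive path graph on `ℕ`, allowed to pause. -/
def IsWalk (F : ℕ → ℕ) : Prop := ∀ i, adjPath (F i) (F (i + 1))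

variable {F : ℕ → ℕ}

theorem adjPath.symm {x y : ℕ} (h : adjPath x y) : adjPath y x := And.symm h

theorem adjPath_iff {x y : ℕ} : adjPath x y ↔ x = y ∨ y = x + 1 ∨ x = y + 1 := by
  unfold adjPath
  omega

theorem IsWalk.adjPath_apply (hF : IsWalk F) {x y : ℕ} (h : adjPath x y) :
    adjPath (F x) (F y) := by
  rcases adjPath_iff.1 h with rfl | rfl | rfl
  · exact adjPath_iff.2 (.inl rfl)
  · exact hF x
  · exact (hF y).symm

theorem IsWalk.comp {G : ℕ → ℕ} (hG : IsWalk G) (hF : IsWalk F) : IsWalk (G ∘ F) :=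
  fun i => hG.adjPath_apply (hF i)

theorem IsWalk.uIcc_subset_image_uIcc (hF : IsWalk F) (p q : ℕ) :
    uIcc (F p) (F q) ⊆ F '' uIcc p q := by
  wlog hpq : p ≤ q generalizing p q
  · simpa only [uIcc_comm] using this q p (by omega)
  induction q, hpq using Nat.le_induction with
  | base => simp
  | succ q hpq ih =>
    intro c hc
    by_cases hcq : c = F (q + 1)
    · exact ⟨q + 1, right_mem_uIcc, hcq.symm⟩
    · have hc' : c ∈ uIcc (F p) (F q) := by
        have := hF q
        simp only [mem_uIcc, adjPath] at *
        omega
      exact image_mono (uIcc_subset_uIcc_left (mem_uIcc_of_le hpq q.le_succ)) (ih hc')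

theorem IsWalk.exists_upcrossing (hF : IsWalk F) {b j : ℕ} (h0 : F 0 ≤ b) (hj : b < F j) :
    ∃ i < j, F i = b ∧ F (i + 1) = b + 1 := by
  classical
  have hex : ∃ i, b < F i := ⟨j, hj⟩
  obtain ⟨i, hi⟩ : ∃ i, Nat.find hex = i + 1 :=
    Nat.exists_eq_succ_of_ne_zero fun h => by have := Nat.find_spec hex; rw [h] at this; omega
  have hlow : ¬ b < F i := Nat.find_min hex (by omega)
  have hhigh : b < F (i + 1) := hi ▸ Nat.find_spec hex
  have hstep := hF i
  unfold adjPath at hstep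
  have hle : i + 1 ≤ j := hi ▸ Nat.find_min' hex hj
  exact ⟨i, hle, by omega, by omega⟩

theorem IsWalk.isPathEpi {n m j : ℕ} (hF : IsWalk F) (hlt : ∀ i, F i < m + 1) (h0 : F 0 = 0)
    (hj : j < n) (hm : F j = m) : IsPathEpi n (m + 1) F := by
  refine ⟨fun a _ => hlt a, fun x y _ _ => hF.adjPath_apply, fun b b' hb hb' h => ?_⟩
  have hcross (c : ℕ) (hc : c + 1 < m + 1) :
      ∃ x y, x < n ∧ y < n ∧ adjPath x y ∧ F x = c ∧ F y = c + 1 := by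
    obtain ⟨i, hij, hi, hi'⟩ := hF.exists_upcrossing (b := c) (j := j) (by omega) (by omega)
    exact ⟨i, i + 1, by omega, by omega, adjPath_iff.2 (by omega), hi, hi'⟩
  rcases adjPath_iff.1 h with rfl | rfl | rfl
  · obtain ⟨x, hx, rfl⟩ := hF.uIcc_subset_image_uIcc 0 j
      (show b ∈ uIcc (F 0) (F j) from mem_uIcc_of_le (by omega) (by omega))
    have hxn : x < n := by rw [mem_uIcc] at hx; omega
    exact ⟨x, x, hxn, hxn, adjPath_iff.2 (.inl rfl), rfl, rfl⟩
  · exact hcross b hb'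
  · obtain ⟨x, y, hx, hy, hxy, hFx, hFy⟩ := hcross b' hb
    exact ⟨y, x, hy, hx, hxy.symm, hFy, hFx⟩

end Walk

section FiberGraph

/-- The fibre product of two walks `F` and `F'`, as a graph: its edges are the simultaneous moves
(pauses in one coordinate included) between pairs over which `F` and `F'` agree. The other pairs
are isolated vertices. -/
def fiberGraph (F F' : ℕ → ℕ) : SimpleGraph (ℕ × ℕ) where
  Adj a b := a ≠ b ∧ (F a.1 = F' a.2 ∧ F b.1 = F' b.2) ∧ adjPath a.1 b.1 ∧ adjPath a.2 b.2
  symm := ⟨fun _ _ ⟨hne, hfib, h, h'⟩ => ⟨hne.symm, hfib.symm, h.symm, h'.symm⟩⟩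
  loopless := ⟨fun _ h => h.1 rfl⟩

variable {F F' : ℕ → ℕ}

theorem fiberGraph_reachable_of_adjPath {p q p' q' : ℕ} (hp : F p = F' p') (hq : F q = F' q')
    (h : adjPath p q) (h' : adjPath p' q') : (fiberGraph F F').Reachable (p, p') (q, q') := by
  by_cases hne : (p, p') = (q, q')
  · rw [hne]
  · exact SimpleGraph.Adj.reachable ⟨hne, ⟨hp, hq⟩, h, h'⟩

theorem fiberGraph_reachable_swap {a b : ℕ × ℕ} (h : (fiberGraph F F').Reachable a b) :
    (fiberGraph F' F).Reachable a.swap b.swap :=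
  let swapHom : fiberGraph F F' →g fiberGraph F' F :=
    ⟨Prod.swap, fun ⟨hne, ⟨ha, hb⟩, h, h'⟩ =>
      ⟨Prod.swap_injective.ne hne, ⟨ha.symm, hb.symm⟩, h', h⟩⟩
  h.map swapHom

theorem exists_isWalk_of_fiberGraph_reachable {a b : ℕ × ℕ} (ha : F a.1 = F' a.2)
    (h : (fiberGraph F F').Reachable a b) :
    ∃ (l : ℕ) (u u' : ℕ → ℕ), IsWalk u ∧ IsWalk u' ∧ (∀ i, F (u i) = F' (u' i)) ∧
      (u 0, u' 0) = a ∧ (u l, u' l) = b := by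
  obtain ⟨w⟩ := h
  have hstep (i : ℕ) : adjPath (w.getVert i).1 (w.getVert (i + 1)).1 ∧
      adjPath (w.getVert i).2 (w.getVert (i + 1)).2 := by
    rcases lt_or_ge i w.length with hi | hi
    · exact (w.adj_getVert_succ hi).2.2
    · rw [w.getVert_of_length_le hi, w.getVert_of_length_le (by omega)]
      exact ⟨adjPath_iff.2 (.inl rfl), adjPath_iff.2 (.inl rfl)⟩
  have hfib (i : ℕ) : F (w.getVert i).1 = F' (w.getVert i).2 := by
    induction i with
    | zero => simpa using ha
    | succ i ih =>
      rcases lt_or_ge i w.length with hi | hi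
      · exact (w.adj_getVert_succ hi).2.1.2
      · rwa [w.getVert_of_length_le (by omega), ← w.getVert_of_length_le hi]
  exact ⟨w.length, fun i => (w.getVert i).1, fun i => (w.getVert i).2, fun i => (hstep i).1,
    fun i => (hstep i).2, hfib, by simp, by simp⟩

end FiberGraph

section Climbing

/-- Between the times `p` and `q` (in either order) the walk `F` stays between its values at `p`
and at `q`: the shape of walk to which the mountain climbing lemma applies. -/
def IsClimb (F : ℕ → ℕ) (p q : ℕ) : Prop := MapsTo F (uIcc p q) (uIcc (F p) (F q))

variable {F F' : ℕ → ℕ} {p q p' q' : ℕ}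

theorem IsClimb.symm (h : IsClimb F p q) : IsClimb F q p := by
  simpa only [IsClimb, uIcc_comm] using h

theorem IsClimb.exists_isClimb_of_mem_uIcc (hF : IsWalk F) (h : IsClimb F p q) {c : ℕ}
    (hc : c ∈ uIcc (F p) (F q)) : ∃ s ∈ uIcc p q, F s = c ∧ IsClimb F p s := by
  have hne : {z ∈ uIcc p q | F z = c}.Nonempty := hF.uIcc_subset_image_uIcc p q hc
  obtain ⟨s, ⟨hs, rfl⟩, hmin⟩ := exists_min_image {z ∈ uIcc p q | F z = c}
    (fun z => (z - p) + (p - z)) ((finite_Icc _ _).subset (sep_subset _ _)) hne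
  refine ⟨s, hs, rfl, fun x hx => ?_⟩
  have hxq : x ∈ uIcc p q := uIcc_subset_uIcc_left hs hx
  have hFx := h hxq
  by_contra hout
  have hbetween : F s ∈ uIcc (F p) (F x) := by simp only [mem_uIcc] at *; omega
  obtain ⟨y, hy, hFy⟩ := hF.uIcc_subset_image_uIcc p x hbetween
  have hclosest := hmin y ⟨uIcc_subset_uIcc_left hxq hy, hFy⟩
  obtain rfl : x = s := by simp only [mem_uIcc] at hs hx hy; omega
  exact hout right_mem_uIcc

theorem exists_farthest_apply (F : ℕ → ℕ) {a b : ℕ} (h : MapsTo F (uIcc p q) (uIcc a b)) :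
    ∃ s ∈ uIcc p q, MapsTo F (uIcc p q) (uIcc a (F s)) := by
  obtain ⟨s, hs, hmax⟩ := exists_max_image (uIcc p q) (fun x => (F x - a) + (a - F x))
    (finite_Icc _ _) nonempty_uIcc
  refine ⟨s, hs, fun x hx => ?_⟩
  have hdist := hmax x hx
  have hFx := h hx
  have hFs := h hs
  simp only [mem_uIcc] at hFx hFs ⊢
  omega

theorem fiberGraph_reachable_of_const (h : ∀ x ∈ uIcc p q, F x = F' p') :
    (fiberGraph F F').Reachable (p, p') (q, p') := by
  wlog hpq : p ≤ q generalizing p q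
  · exact (this (by rwa [uIcc_comm]) (by omega)).symm
  induction q, hpq using Nat.le_induction with
  | base => rfl
  | succ q hpq ih =>
    rw [uIcc_of_le (by omega)] at h
    rw [uIcc_of_le hpq] at ih
    exact (ih fun x hx => h x ⟨hx.1, hx.2.trans q.le_succ⟩).trans
      (fiberGraph_reachable_of_adjPath (h q ⟨hpq, q.le_succ⟩) (h (q + 1) ⟨by omega, le_rfl⟩)
        (adjPath_iff.2 (by omega)) (adjPath_iff.2 (by omega)))

theorem IsClimb.fiberGraph_reachable_of_apply_eq (hc : IsClimb F p q) (hc' : IsClimb F' p' q')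
    (hp : F p = F' p') (hq : F q = F' q') (hpq : F p = F q) :
    (fiberGraph F F').Reachable (p, p') (q, q') := by
  have hconst : ∀ x ∈ uIcc p q, F x = F' p' := fun x hx => by
    simpa [← hpq, hp] using hc hx
  have hconst' : ∀ x ∈ uIcc p' q', F' x = F q := fun x hx => by
    simpa [← hq, ← hpq, ← hp] using hc' hx
  exact (fiberGraph_reachable_of_const hconst).trans
    (fiberGraph_reachable_swap (fiberGraph_reachable_of_const hconst'))

/-- The mountain climbing lemma for `F` and `F'`, restricted to pairs of climbs of total length
less than `N`, as needed for the induction on that length. -/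
def ClimbsJoinedBelow (F F' : ℕ → ℕ) (N : ℕ) : Prop :=
  ∀ p q p' q', (p - q) + (q - p) + ((p' - q') + (q' - p')) < N → F p = F' p' → F q = F' q' →
    IsClimb F p q → IsClimb F' p' q' → (fiberGraph F F').Reachable (p, p') (q, q')

theorem ClimbsJoinedBelow.swap {N : ℕ} (h : ClimbsJoinedBelow F F' N) :
    ClimbsJoinedBelow F' F N :=
  fun p q p' q' hN hp hq hc hc' =>
    fiberGraph_reachable_swap (h p' q' p q (by omega) hp.symm hq.symm hc' hc)

/-- Move from `p` to the revisit `r` by a detour over the point of `[p, r]` where `F` is farthest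
from `F p`, climbing up and back down with `F'`. -/
theorem ClimbsJoinedBelow.reachable_of_revisit (hF' : IsWalk F')
    (ih : ClimbsJoinedBelow F F' ((p - q) + (q - p) + ((p' - q') + (q' - p'))))
    (hp : F p = F' p') (hq : F q = F' q') (hc : IsClimb F p q) (hc' : IsClimb F' p' q')
    (hpq : F p ≠ F q) {r : ℕ} (hr : r ∈ uIcc p q) (hrp : r ≠ p) (hFr : F r = F p) :
    (fiberGraph F F').Reachable (p, p') (q, q') := by
  have hrq : r ≠ q := by rintro rfl; exact hpq hFr.symm
  obtain ⟨s, hs, hfar⟩ := exists_farthest_apply F (hc.mono_left (uIcc_subset_uIcc_left hr))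
  have hsq : F s ∈ uIcc (F' p') (F' q') := hp ▸ hq ▸ hc (uIcc_subset_uIcc_left hr hs)
  obtain ⟨s', hs', hFs', hcs'⟩ := hc'.exists_isClimb_of_mem_uIcc hF' hsq
  have hps : IsClimb F p s := hfar.mono_left (uIcc_subset_uIcc_left hs)
  have hrs : IsClimb F r s := by
    unfold IsClimb
    rw [hFr]
    exact hfar.mono_left (uIcc_subset_uIcc right_mem_uIcc hs)
  have hrqc : IsClimb F r q := by
    unfold IsClimb
    rw [hFr]
    exact hc.mono_left (uIcc_subset_uIcc_right hr)
  rw [mem_uIcc] at hr hs hs'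
  have hup := ih p s p' s' (by omega) hp hFs'.symm hps hcs'
  have hdown := ih r s p' s' (by omega) (hFr.trans hp) hFs'.symm hrs hcs'
  exact (hup.trans hdown.symm).trans
    (ih r q p' q' (by omega) (hFr.trans hp) hq hrqc hc')

/-- The neighbour of `p` on the way to `q`, with value `p` if `p = q`. It expresses the first move
of a climb both in time and in value. -/
def stepToward (p q : ℕ) : ℕ := if p < q then p + 1 else if q < p then p - 1 else p

theorem adjPath_stepToward : adjPath p (stepToward p q) := by
  unfold stepToward adjPath
  grind

theorem stepToward_mem_uIcc : stepToward p q ∈ uIcc p q := by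
  unfold stepToward
  grind [mem_uIcc]

theorem IsClimb.apply_stepToward (hF : IsWalk F) (h : IsClimb F p q) (hpq : F p ≠ F q)
    (hrev : ∀ x ∈ uIcc p q, F x = F p → x = p) :
    F (stepToward p q) = stepToward (F p) (F q) ∧ IsClimb F (stepToward p q) q := by
  have hne : p ≠ q := by rintro rfl; exact hpq rfl
  have hnotMem : p ∉ uIcc (stepToward p q) q := by
    unfold stepToward
    grind [mem_uIcc]
  have hadj := hF.adjPath_apply (adjPath_stepToward (p := p) (q := q))
  have hmem := h (stepToward_mem_uIcc (p := p) (q := q))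
  have hstep : F (stepToward p q) ≠ F p := fun heq =>
    hnotMem (by simpa only [hrev _ stepToward_mem_uIcc heq] using left_mem_uIcc)
  have hval : F (stepToward p q) = stepToward (F p) (F q) := by
    generalize F (stepToward p q) = v at *
    unfold stepToward adjPath at *
    grind [mem_uIcc]
  refine ⟨hval, fun x hx => ?_⟩
  have hxq : x ∈ uIcc p q := uIcc_subset_uIcc_right stepToward_mem_uIcc hx
  have hxp : F x ≠ F p := fun heq => hnotMem (hrev x hxq heq ▸ hx)
  have hFx := h hxq
  rw [hval]
  unfold stepToward
  grind [mem_uIcc]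

theorem climbsJoinedBelow (hF : IsWalk F) (hF' : IsWalk F') (N : ℕ) :
    ClimbsJoinedBelow F F' N := by
  induction N with
  | zero => exact fun p q p' q' h => absurd h (Nat.not_lt_zero _)
  | succ N ih =>
    intro p q p' q' hN hp hq hc hc'
    have ih : ClimbsJoinedBelow F F' ((p - q) + (q - p) + ((p' - q') + (q' - p'))) :=
      fun a b a' b' h => ih a b a' b' (by omega)
    by_cases hpq : F p = F q
    · exact hc.fiberGraph_reachable_of_apply_eq hc' hp hq hpq
    by_cases hrev : ∀ x ∈ uIcc p q, F x = F p → x = p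
    swap
    · push Not at hrev
      obtain ⟨r, hr, hFr, hrp⟩ := hrev
      exact ih.reachable_of_revisit hF' hp hq hc hc' hpq hr hrp hFr
    have hpq' : F' p' ≠ F' q' := hp ▸ hq ▸ hpq
    by_cases hrev' : ∀ x ∈ uIcc p' q', F' x = F' p' → x = p'
    swap
    · push Not at hrev'
      obtain ⟨r, hr, hFr, hrp⟩ := hrev'
      rw [add_comm] at ih
      exact fiberGraph_reachable_swap
        (ih.swap.reachable_of_revisit hF hp.symm hq.symm hc' hc hpq' hr hrp hFr)
    obtain ⟨hval, hclimb⟩ := hc.apply_stepToward hF hpq hrev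
    obtain ⟨hval', hclimb'⟩ := hc'.apply_stepToward hF' hpq' hrev'
    have hagree : F (stepToward p q) = F' (stepToward p' q') := by rw [hval, hval', hp, hq]
    have hcloser : p ≠ q := by rintro rfl; exact hpq rfl
    refine (fiberGraph_reachable_of_adjPath hp hagree adjPath_stepToward adjPath_stepToward).trans
      (ih _ _ _ _ ?_ hagree hq hclimb hclimb')
    unfold stepToward
    grind

theorem IsClimb.fiberGraph_reachable (hF : IsWalk F) (hF' : IsWalk F') (hc : IsClimb F p q)
    (hc' : IsClimb F' p' q') (hp : F p = F' p') (hq : F q = F' q') :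
    (fiberGraph F F').Reachable (p, p') (q, q') :=
  climbsJoinedBelow hF hF' _ p q p' q' (Nat.lt_succ_self _) hp hq hc hc'

end Climbing

section Extremes

/-- `v` is the minimum or the maximum of `A`. Pairs over such values of a common prefix image lie in
one component of the fibre product. -/
def IsExtremeValue {α : Type*} [Preorder α] (A : Set α) (v : α) : Prop :=
  IsLeast A v ∨ IsGreatest A v

variable {F F' : ℕ → ℕ} {k k' p q p' q' : ℕ}

theorem isClimb_of_isLeast_of_isGreatest (hp : p ≤ k) (hq : q ≤ k)
    (hmin : IsLeast (F '' Iic k) (F p)) (hmax : IsGreatest (F '' Iic k) (F q)) :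
    IsClimb F p q := fun x hx => by
  have hxk : F x ∈ F '' Iic k := ⟨x, hx.2.trans (sup_le hp hq), rfl⟩
  exact mem_uIcc_of_le (hmin.2 hxk) (hmax.2 hxk)

theorem fiberGraph_reachable_of_isLeast_of_isGreatest (hF : IsWalk F) (hF' : IsWalk F')
    (hk : F '' Iic k = F' '' Iic k') (hp : p ≤ k) (hp' : p' ≤ k') (hpp' : F p = F' p')
    (hq : q ≤ k) (hq' : q' ≤ k') (hqq' : F q = F' q') (hmin : IsLeast (F '' Iic k) (F p))
    (hmax : IsGreatest (F '' Iic k) (F q)) : (fiberGraph F F').Reachable (p, p') (q, q') :=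
  IsClimb.fiberGraph_reachable hF hF' (isClimb_of_isLeast_of_isGreatest hp hq hmin hmax)
    (isClimb_of_isLeast_of_isGreatest hp' hq' (hk ▸ hpp' ▸ hmin) (hk ▸ hqq' ▸ hmax)) hpp' hqq'

theorem fiberGraph_reachable_of_isExtremeValue (hF : IsWalk F) (hF' : IsWalk F')
    (hk : F '' Iic k = F' '' Iic k') (hp : p ≤ k) (hp' : p' ≤ k') (hpp' : F p = F' p')
    (hq : q ≤ k) (hq' : q' ≤ k') (hqq' : F q = F' q') (hextp : IsExtremeValue (F '' Iic k) (F p))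
    (hextq : IsExtremeValue (F '' Iic k) (F q)) : (fiberGraph F F').Reachable (p, p') (q, q') := by
  have hcompact : IsCompact (F '' Iic k) := ((finite_Iic k).image F).isCompact
  have hnonempty : (F '' Iic k).Nonempty := nonempty_Iic.image F
  obtain ⟨_, hmin⟩ := hcompact.exists_isLeast hnonempty
  obtain ⟨_, hmax⟩ := hcompact.exists_isGreatest hnonempty
  obtain ⟨a, ha, rfl⟩ := hmin.1
  obtain ⟨b, hb, rfl⟩ := hmax.1
  obtain ⟨a', ha', haa'⟩ := hk ▸ hmin.1
  obtain ⟨b', hb', hbb'⟩ := hk ▸ hmax.1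
  have hjoin {x x' y y' : ℕ} (hx : x ≤ k) (hx' : x' ≤ k') (hxx' : F x = F' x') (hy : y ≤ k)
      (hy' : y' ≤ k') (hyy' : F y = F' y') :=
    fiberGraph_reachable_of_isLeast_of_isGreatest hF hF' hk hx hx' hxx' hy hy' hyy'
  rcases hextp with hp_min | hp_max <;> rcases hextq with hq_min | hq_max
  · exact (hjoin hp hp' hpp' hb hb' hbb'.symm hp_min hmax).trans
      (hjoin hq hq' hqq' hb hb' hbb'.symm hq_min hmax).symm
  · exact hjoin hp hp' hpp' hq hq' hqq' hp_min hq_max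
  · exact (hjoin hq hq' hqq' hp hp' hpp' hq_min hp_max).symm
  · exact (hjoin ha ha' haa'.symm hp hp' hpp' hmin hp_max).symm.trans
      (hjoin ha ha' haa'.symm hq hq' hqq' hmin hq_max)

end Extremes

section Records

/-- The type of the walk `F` at its start: the family of images of its initial segments. -/
def walkType (F : ℕ → ℕ) : Set (Set ℕ) := range fun k => F '' Iic k

variable {F F' : ℕ → ℕ} {s s' t t' k k' p p' : ℕ}

theorem apply_zero_eq_of_walkType_subset (hT : walkType F ⊆ walkType F') : F 0 = F' 0 := by
  obtain ⟨j, hj : F' '' Iic j = F '' Iic 0⟩ := hT ⟨0, rfl⟩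
  obtain ⟨x, hx, hFx⟩ : F' 0 ∈ F '' Iic 0 := hj ▸ mem_image_of_mem F' (mem_Iic.2 j.zero_le)
  rw [← hFx, Nat.le_zero.1 hx]

/-- At time `t` the walk `F` takes a value for the first time. Records are the times at
which the prefix image grows, and thus the steps at which the type of `F` changes. -/
def IsRecord (F : ℕ → ℕ) (t : ℕ) : Prop := F t ∉ F '' Iio t

theorem exists_isRecord_image_Iic_eq (F : ℕ → ℕ) (k : ℕ) :
    ∃ r ≤ k, IsRecord F r ∧ F '' Iic r = F '' Iic k := by
  induction k with
  | zero => exact ⟨0, le_rfl, by simp [IsRecord], rfl⟩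
  | succ k ih =>
    by_cases hrec : IsRecord F (k + 1)
    · exact ⟨k + 1, le_rfl, hrec, rfl⟩
    · obtain ⟨r, hrk, hr, himage⟩ := ih
      refine ⟨r, by omega, hr, ?_⟩
      have hold : F (k + 1) ∈ F '' Iic k := by
        simpa only [IsRecord, not_not, Iio_add_one_eq_Iic] using hrec
      rw [himage, ← Order.succ_eq_add_one, Order.Iic_succ, image_insert_eq,
        Order.succ_eq_add_one, insert_eq_of_mem hold]

theorem IsRecord.isExtremeValue (hF : IsWalk F) (ht : IsRecord F t) :
    IsExtremeValue (F '' Iic t) (F t) := by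
  have hmem : F t ∈ F '' Iic t := ⟨t, self_mem_Iic, rfl⟩
  by_contra hnot
  simp only [IsExtremeValue, IsLeast, IsGreatest, hmem, true_and, not_or, mem_lowerBounds,
    mem_upperBounds, forall_mem_image, mem_Iic, not_forall, not_le] at hnot
  obtain ⟨⟨x, hxt, hx⟩, y, hyt, hy⟩ := hnot
  obtain ⟨z, hz, hzt⟩ := hF.uIcc_subset_image_uIcc x y (mem_uIcc_of_le hx.le hy.le)
  have hzle : z ≤ t := hz.2.trans (sup_le hxt hyt)
  have hxne : x ≠ t := by rintro rfl; exact hx.false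
  have hyne : y ≠ t := by rintro rfl; exact hy.false
  rw [mem_uIcc] at hz
  exact ht ⟨z, mem_Iio.2 (by omega), hzt⟩

theorem IsRecord.image_Iio_subset (hT : walkType F ⊆ walkType F') (ht : IsRecord F t)
    (himage : F '' Iic t = F' '' Iic t') : F '' Iio t ⊆ F' '' Iio t' := by
  rintro _ ⟨x, hx, rfl⟩
  obtain ⟨j, hj : F' '' Iic j = F '' Iic x⟩ := hT ⟨x, rfl⟩
  have hjt : j < t' := by
    by_contra! hle
    have hnew : F t ∈ F' '' Iic t' := himage ▸ mem_image_of_mem F self_mem_Iic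
    have hseen : F t ∈ F '' Iic x := hj ▸ image_mono (Iic_subset_Iic.2 hle) hnew
    exact ht (image_mono (Iic_subset_Iio.2 hx) hseen)
  have hFx : F x ∈ F' '' Iic j := hj ▸ mem_image_of_mem F self_mem_Iic
  exact image_mono (Iic_subset_Iio.2 hjt) hFx

theorem IsRecord.image_Iio_eq (hT : walkType F = walkType F') (ht : IsRecord F t)
    (ht' : IsRecord F' t') (himage : F '' Iic t = F' '' Iic t') :
    F '' Iio t = F' '' Iio t' :=
  (ht.image_Iio_subset hT.subset himage).antisymm (ht'.image_Iio_subset hT.symm.subset himage.symm)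

theorem IsRecord.apply_eq (hT : walkType F = walkType F') (ht : IsRecord F t)
    (ht' : IsRecord F' t') (himage : F '' Iic t = F' '' Iic t') : F t = F' t' := by
  obtain ⟨y, hy, hFy⟩ : F t ∈ F' '' Iic t' := himage ▸ mem_image_of_mem F self_mem_Iic
  rcases (mem_Iic.1 hy).lt_or_eq with hlt | rfl
  · have hseen : F t ∈ F '' Iio t := by
      rw [ht.image_Iio_eq hT ht' himage]
      exact ⟨y, hlt, hFy⟩
    exact absurd hseen ht
  · exact hFy.symm

theorem IsRecord.isLeast_or_isGreatest_pred (hF : IsWalk F) (hs : IsRecord F (s + 1)) :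
    F (s + 1) < F s ∧ IsLeast (F '' Iic s) (F s) ∨
      F s < F (s + 1) ∧ IsGreatest (F '' Iic s) (F s) := by
  have hstep := hF s
  have hne (x : ℕ) (hx : x ≤ s) : F x ≠ F (s + 1) :=
    fun h => hs ⟨x, Nat.lt_succ_of_le hx, h⟩
  have hmem (x : ℕ) (hx : x ≤ s) : F x ∈ F '' Iic (s + 1) := ⟨x, mem_Iic.2 (by omega), rfl⟩
  have hlast := hne s le_rfl
  unfold adjPath at hstep
  rcases hs.isExtremeValue hF with hmin | hmax
  · refine .inl ⟨by have := hmin.2 (hmem s le_rfl); omega, ⟨s, self_mem_Iic, rfl⟩, ?_⟩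
    rintro _ ⟨x, hx, rfl⟩
    have := hmin.2 (hmem x hx)
    have := hne x hx
    omega
  · refine .inr ⟨by have := hmax.2 (hmem s le_rfl); omega, ⟨s, self_mem_Iic, rfl⟩, ?_⟩
    rintro _ ⟨x, hx, rfl⟩
    have := hmax.2 (hmem x hx)
    have := hne x hx
    omega

theorem IsRecord.pred_apply_eq (hF : IsWalk F) (hF' : IsWalk F') (hs : IsRecord F (s + 1))
    (hs' : IsRecord F' (s' + 1)) (himage : F '' Iic s = F' '' Iic s')
    (hval : F (s + 1) = F' (s' + 1)) : F s = F' s' := by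
  have hside := hs.isLeast_or_isGreatest_pred hF
  rw [himage] at hside
  rcases hside with ⟨hlt, hmin⟩ | ⟨hlt, hmax⟩ <;>
    rcases hs'.isLeast_or_isGreatest_pred hF' with ⟨hlt', hmin'⟩ | ⟨hlt', hmax'⟩
  · exact hmin.unique hmin'
  · have := hmin.2 hmax'.1
    omega
  · have := hmax.2 hmin'.1
    omega
  · exact hmax.unique hmax'

theorem IsRecord.fiberGraph_reachable (hF : IsWalk F) (hF' : IsWalk F')
    (hT : walkType F = walkType F') (ht : IsRecord F t) (ht' : IsRecord F' t')
    (himage : F '' Iic t = F' '' Iic t') : (fiberGraph F F').Reachable (0, 0) (t, t') := by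
  induction t using Nat.strong_induction_on generalizing t' with
  | _ t ih =>
  have himageIio := ht.image_Iio_eq hT ht' himage
  have hval := ht.apply_eq hT ht' himage
  have hzero : t = 0 ↔ t' = 0 := by simpa using congrArg (· = ∅) himageIio
  rcases t with _ | s <;> rcases t' with _ | s'
  · rfl
  · simp at hzero
  · simp at hzero
  have himage_s : F '' Iic s = F' '' Iic s' := by simpa only [Iio_add_one_eq_Iic] using himageIio
  have hval_s := ht.pred_apply_eq hF hF' ht' himage_s hval
  have hext_s : IsExtremeValue (F '' Iic s) (F s) :=
    (ht.isLeast_or_isGreatest_pred hF).imp And.right And.right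
  obtain ⟨r, hrs, hr, himage_r⟩ := exists_isRecord_image_Iic_eq F s
  obtain ⟨r', hrs', hr', himage_r'⟩ := exists_isRecord_image_Iic_eq F' s'
  have himage_rr' : F '' Iic r = F' '' Iic r' := by rw [himage_r, himage_s, himage_r']
  have hto_record := ih r (by omega) hr hr' himage_rr'
  have hto_pred := fiberGraph_reachable_of_isExtremeValue hF hF' himage_s hrs hrs'
    (hr.apply_eq hT hr' himage_rr') le_rfl le_rfl hval_s (himage_r ▸ hr.isExtremeValue hF) hext_s
  exact (hto_record.trans hto_pred).trans
    (fiberGraph_reachable_of_adjPath hval_s hval (adjPath_iff.2 (by omega))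
      (adjPath_iff.2 (by omega)))

theorem fiberGraph_reachable_zero_of_isExtremeValue (hF : IsWalk F) (hF' : IsWalk F')
    (hT : walkType F = walkType F') (himage : F '' Iic k = F' '' Iic k') (hp : p ≤ k)
    (hp' : p' ≤ k') (hval : F p = F' p') (hext : IsExtremeValue (F '' Iic k) (F p)) :
    (fiberGraph F F').Reachable (0, 0) (p, p') := by
  obtain ⟨r, hrk, hr, himage_r⟩ := exists_isRecord_image_Iic_eq F k
  obtain ⟨r', hrk', hr', himage_r'⟩ := exists_isRecord_image_Iic_eq F' k'
  have himage_rr' : F '' Iic r = F' '' Iic r' := by rw [himage_r, himage, himage_r']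
  exact (hr.fiberGraph_reachable hF hF' hT hr' himage_rr').trans
    (fiberGraph_reachable_of_isExtremeValue hF hF' himage hrk hrk' (hr.apply_eq hT hr' himage_rr')
      hp hp' hval (himage_r ▸ hr.isExtremeValue hF) hext)

end Records

section Fold

/-- The walk `0, 1, …, m, …, 1, 0, 0, …` folding `ℕ` onto the path on `[0, m]`; the subtraction
is truncated, which makes the walk stay at `0` from time `2 * m` on. -/
def pathFold (m x : ℕ) : ℕ := min x (2 * m - x)

variable {m m' l : ℕ} {f f' u : ℕ → ℕ}

theorem pathFold_le (m x : ℕ) : pathFold m x ≤ m := by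
  unfold pathFold
  omega

theorem pathFold_of_le {x : ℕ} (h : x ≤ m) : pathFold m x = x := by
  unfold pathFold
  omega

theorem pathFold_two_mul_sub {x : ℕ} (h : x ≤ m) : pathFold m (2 * m - x) = x := by
  unfold pathFold
  omega

theorem isWalk_pathFold (m : ℕ) : IsWalk (pathFold m) := fun i => by
  unfold pathFold adjPath
  omega

theorem image_pathFold_Iic (m k : ℕ) : pathFold m '' Iic k = Iic (min k m) := by
  ext y
  constructor
  · rintro ⟨x, hx, rfl⟩
    simp only [mem_Iic, pathFold] at hx ⊢
    omega
  · intro hy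
    rw [mem_Iic, le_min_iff] at hy
    exact ⟨y, hy.1, pathFold_of_le hy.2⟩

theorem image_comp_pathFold_Iic (f : ℕ → ℕ) (m k : ℕ) :
    (f ∘ pathFold m) '' Iic k = f '' Iic (min k m) := by
  rw [image_comp, image_pathFold_Iic]

theorem isWalk_comp_pathFold
    (hf : ∀ x y, x < m + 1 → y < m + 1 → adjPath x y → adjPath (f x) (f y)) :
    IsWalk (f ∘ pathFold m) := fun i =>
  hf _ _ (Nat.lt_succ_of_le (pathFold_le m i)) (Nat.lt_succ_of_le (pathFold_le m (i + 1)))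
    (isWalk_pathFold m i)

theorem walkType_comp_pathFold (f : ℕ → ℕ) (m : ℕ) :
    walkType (f ∘ pathFold m) = tpZero (m + 1) f := by
  ext S
  simp only [walkType, tpZero, mem_range, mem_ofPred_eq, image_comp_pathFold_Iic]
  constructor
  · rintro ⟨k, rfl⟩
    exact ⟨min k m + 1, by omega, by omega, by rw [Iio_add_one_eq_Iic]⟩
  · rintro ⟨k, hk, hkm, rfl⟩
    obtain ⟨k, rfl⟩ := Nat.exists_eq_add_of_le' hk
    exact ⟨k, by rw [Iio_add_one_eq_Iic, min_eq_left (by omega)]⟩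

theorem image_Iic_subset_of_tpZero_subset (h : tpZero (m + 1) f ⊆ tpZero (m' + 1) f') :
    f '' Iic m ⊆ f' '' Iic m' := by
  obtain ⟨k, -, hk, himage⟩ := h ⟨m + 1, by omega, le_rfl, rfl⟩
  rw [← Iio_add_one_eq_Iic, ← Iio_add_one_eq_Iic, himage]
  exact image_mono (Iio_subset_Iio hk)

theorem isPathEpi_pathFold_comp (hu : IsWalk u) (h0 : u 0 = 0) (hl : m ≤ u l) :
    IsPathEpi (l + 1) (m + 1) (pathFold m ∘ u) := by
  obtain ⟨j, hj, hjm⟩ : m ∈ u '' uIcc 0 l :=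
    hu.uIcc_subset_image_uIcc 0 l (mem_uIcc_of_le (by omega) hl)
  refine ((isWalk_pathFold m).comp hu).isPathEpi (j := j)
    (fun i => Nat.lt_succ_of_le (pathFold_le m _)) (by simp [h0, pathFold]) ?_ ?_
  · rw [mem_uIcc] at hj
    omega
  · rw [Function.comp_apply, hjm, pathFold_of_le le_rfl]

theorem exists_fiberGraph_reachable_past_turn
    (hf : ∀ x y, x < m + 1 → y < m + 1 → adjPath x y → adjPath (f x) (f y))
    (hf' : ∀ x y, x < m' + 1 → y < m' + 1 → adjPath x y → adjPath (f' x) (f' y))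
    (htp : tpZero (m + 1) f = tpZero (m' + 1) f') :
    ∃ q q', m ≤ q ∧ m' ≤ q' ∧
      (fiberGraph (f ∘ pathFold m) (f' ∘ pathFold m')).Reachable (0, 0) (q, q') := by
  have himage : f '' Iic m = f' '' Iic m' :=
    (image_Iic_subset_of_tpZero_subset htp.subset).antisymm
      (image_Iic_subset_of_tpZero_subset htp.symm.subset)
  obtain ⟨_, hmax⟩ := ((finite_Iic m).image f).isCompact.exists_isGreatest (nonempty_Iic.image f)
  obtain ⟨p, hp, rfl⟩ := hmax.1
  obtain ⟨p', hp', hpp'⟩ := himage ▸ hmax.1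
  rw [mem_Iic] at hp hp'
  have hfold (n : ℕ) (h : ℕ → ℕ) : (h ∘ pathFold n) '' Iic (2 * n) = h '' Iic n := by
    rw [image_comp_pathFold_Iic, min_eq_right (by omega)]
  refine ⟨2 * m - p, 2 * m' - p', by omega, by omega,
    fiberGraph_reachable_zero_of_isExtremeValue (k := 2 * m) (k' := 2 * m')
      (isWalk_comp_pathFold hf) (isWalk_comp_pathFold hf') ?_ ?_
      (Nat.sub_le _ _) (Nat.sub_le _ _) ?_ (.inr ?_)⟩
  · rw [walkType_comp_pathFold, walkType_comp_pathFold, htp]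
  · rw [hfold, hfold, himage]
  · simp only [Function.comp_apply, pathFold_two_mul_sub hp, pathFold_two_mul_sub hp', hpp']
  · rwa [hfold, Function.comp_apply, pathFold_two_mul_sub hp]

end Fold

theorem stmt13_general {nM nM' : ℕ} (hnM : 1 ≤ nM) (hnM' : 1 ≤ nM') {f f' : ℕ → ℕ}
    (hf : ∀ x y, x < nM → y < nM → adjPath x y → adjPath (f x) (f y))
    (hf' : ∀ x y, x < nM' → y < nM' → adjPath x y → adjPath (f' x) (f' y))
    (htp : tpZero nM f = tpZero nM' f') :
    ∃ (nO : ℕ) (g g' : ℕ → ℕ), 1 ≤ nO ∧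
      IsPathEpi nO nM g ∧ IsPathEpi nO nM' g' ∧
      (∀ j, j < nO → f (g j) = f' (g' j)) ∧
      g 0 = 0 ∧ g' 0 = 0 := by
  obtain ⟨m, rfl⟩ := Nat.exists_eq_add_of_le' hnM
  obtain ⟨m', rfl⟩ := Nat.exists_eq_add_of_le' hnM'
  have hstart : (f ∘ pathFold m) 0 = (f' ∘ pathFold m') 0 :=
    apply_zero_eq_of_walkType_subset (by rw [walkType_comp_pathFold, walkType_comp_pathFold, htp])
  obtain ⟨q, q', hq, hq', hreach⟩ := exists_fiberGraph_reachable_past_turn hf hf' htp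
  obtain ⟨l, u, u', hu, hu', hagree, h0, hl⟩ :=
    exists_isWalk_of_fiberGraph_reachable hstart hreach
  obtain ⟨hu0, hu0'⟩ := Prod.mk.inj h0
  obtain ⟨rfl, rfl⟩ := Prod.mk.inj hl
  exact ⟨l + 1, pathFold m ∘ u, pathFold m' ∘ u', by omega, isPathEpi_pathFold_comp hu hu0 hq,
    isPathEpi_pathFold_comp hu' hu0' hq', fun j _ => hagree j, by simp [hu0, pathFold],
    by simp [hu0', pathFold]⟩

/-- One-endpoint amalgamation with equal types (the `moreover` clause of the
Solecki–Tsankov amalgamation lemma). -/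
theorem stmt13 (nL nM nM' : ℕ) (hnL : 1 ≤ nL) (hnM : 1 ≤ nM) (hnM' : 1 ≤ nM')
    (f f' : ℕ → ℕ)
    (hf : IsPathEpi nM nL f) (hf' : IsPathEpi nM' nL f')
    (htp : tpZero nM f = tpZero nM' f') :
    ∃ (nO : ℕ) (g g' : ℕ → ℕ), 1 ≤ nO ∧
      IsPathEpi nO nM g ∧ IsPathEpi nO nM' g' ∧
      (∀ j, j < nO → f (g j) = f' (g' j)) ∧
      g 0 = 0 ∧ g' 0 = 0 :=
  stmt13_general hnM hnM' hf.2.1 hf'.2.1 htp
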